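/- Let 0 < δ ≤ 1, let r > 0, and let K be a c-packed polygonal curve in ℝ^d all of whose edges have length at least δr. Then for every point q ∈ ℝ^d there exists a finite set W of at most 18·c/δ² points, each lying on K and each within distance 2r of q, such that for every point k on K with ‖k − q‖ ≤ 2r there exist points u, v ∈ W lying on the same edge of K as k, with k on the subsegment of that edge from u to v, ‖u − k‖ ≤ δr, and ‖v − k‖ ≤ δr. -/

import Mathlib

open scoped BigOperators

noncomputable section

/-- Points of `d`-dimensional Euclidean space. -/
abbrev Pt (d : ℕ) := EuclideanSpace ℝ (Fin d)

/-- A reparametrization: a continuous nondecreasing surjection of `[0,1]` onto itself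
(equivalently, continuous and monotone on `[0,1]` with `α 0 = 0` and `α 1 = 1`). -/
structure IsReparam (α : ℝ → ℝ) : Prop where
  continuousOn : ContinuousOn α (Set.Icc 0 1)
  monotoneOn : MonotoneOn α (Set.Icc 0 1)
  map_zero : α 0 = 0
  map_one : α 1 = 1

/-- The Fréchet distance between two curves parametrized over `[0,1]`. -/
noncomputable def frechetDist {d : ℕ} (P Q : ℝ → Pt d) : ℝ :=
  sInf {r : ℝ | ∃ α β : ℝ → ℝ, IsReparam α ∧ IsReparam β ∧
    r = ⨆ t : Set.Icc (0:ℝ) 1, dist (P (α (t : ℝ))) (Q (β (t : ℝ)))}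

/-- The straight-line curve from `a` to `b`, parametrized over `[0,1]`. -/
def seg {d : ℕ} (a b : Pt d) : ℝ → Pt d := fun t => (1 - t) • a + t • b

/-- The subcurve `K|[s,t]`, reparametrized over `[0,1]`. -/
def subcurve {d : ℕ} (K : ℝ → Pt d) (s t : ℝ) : ℝ → Pt d := fun u => K (s + u * (t - s))

/-- `K` is affine-linear on `[a,b]` (constant if `a = b`, by `div_zero`). -/
def AffineOn {d : ℕ} (K : ℝ → Pt d) (a b : ℝ) : Prop :=
  ∀ x ∈ Set.Icc a b, K x = K a + ((x - a) / (b - a)) • (K b - K a)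

/-- Concatenation of two curves parametrized over `[0,1]`. -/
noncomputable def concat {d : ℕ} (A B : ℝ → Pt d) : ℝ → Pt d :=
  fun t => if t ≤ 1 / 2 then A (2 * t) else B (2 * t - 1)

/-- The point at parameter `t ∈ [0,1]` on the segment with endpoints `e.1`, `e.2`. -/
def interpEdge {d : ℕ} (e : Pt d × Pt d) (t : ℝ) : Pt d := (1 - t) • e.1 + t • e.2

/-- The edges of a polygonal curve given by its list of vertices. -/
def edgesOf {d : ℕ} (l : List (Pt d)) : List (Pt d × Pt d) := l.zip l.tail

/-- The length of the part of segment `e` inside the closed ball `B(q,r)`. -/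
noncomputable def segBallLength {d : ℕ} (e : Pt d × Pt d) (q : Pt d) (r : ℝ) : ℝ :=
  (MeasureTheory.volume
      {t : ℝ | t ∈ Set.Icc (0:ℝ) 1 ∧ interpEdge e t ∈ Metric.closedBall q r}).toReal
    * dist e.1 e.2

/-- A polygonal curve with vertex list `l` is `c`-packed: for every point `q` and radius
`r > 0`, the total length of the curve inside `B(q,r)` is at most `c * r`. -/
def CPacked {d : ℕ} (c : ℝ) (l : List (Pt d)) : Prop :=
  ∀ (q : Pt d) (r : ℝ), 0 < r →
    ((edgesOf l).map (fun e => segBallLength e q r)).sum ≤ c * r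

/-- Greedy scan step of the simplification: starting from the current vertex `cur`, mark
the first vertex at distance at least `μ` from `cur` and continue from it. -/
noncomputable def greedyScan {d : ℕ} (μ : ℝ) : Pt d → List (Pt d) → List (Pt d)
  | _, [] => []
  | cur, p :: rest =>
      if μ ≤ dist cur p then p :: greedyScan μ p rest else greedyScan μ cur rest

open Classical in
/-- The greedy `μ`-simplification of a polygonal curve given by its vertex list: mark the
first vertex, greedily scan forward, and always mark the last vertex. -/
noncomputable def simplList {d : ℕ} (μ : ℝ) : List (Pt d) → List (Pt d)
  | [] => []
  | p :: rest =>
      let s := p :: greedyScan μ p rest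
      match rest.getLast? with
      | none => s
      | some last => if s.getLast? = some last then s else s ++ [last]

/-- `P : [0,1] → ℝ^d` is the polygonal curve through the vertex list `l`, with the uniform
parametrization placing vertex `i` at parameter `i / (|l| - 1)`. -/
def IsPolygonalParamL {d : ℕ} (l : List (Pt d)) (P : ℝ → Pt d) : Prop :=
  (∀ i, i < l.length → P ((i : ℝ) / ((l.length : ℝ) - 1)) = l.getD i 0) ∧
  ∀ i, i + 1 < l.length →
    AffineOn P ((i : ℝ) / ((l.length : ℝ) - 1)) (((i : ℝ) + 1) / ((l.length : ℝ) - 1))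

/-- `Q : [0,1] → ℝ^d` is the polygonal curve with vertices `q 0, …, q (m-1)`, with the
uniform parametrization placing vertex `i` at parameter `i / (m - 1)`. -/
def IsPolygonalParam {d : ℕ} (m : ℕ) (q : ℕ → Pt d) (Q : ℝ → Pt d) : Prop :=
  (∀ i, i < m → Q ((i : ℝ) / ((m : ℝ) - 1)) = q i) ∧
  ∀ i, i + 1 < m →
    AffineOn Q ((i : ℝ) / ((m : ℝ) - 1)) (((i : ℝ) + 1) / ((m : ℝ) - 1))

/-- The Euclidean distance from a point `x` to the segment `e`. -/
noncomputable def segDist {d : ℕ} (e : Pt d × Pt d) (x : Pt d) : ℝ :=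
  sInf {r : ℝ | ∃ t ∈ Set.Icc (0:ℝ) 1, r = dist x (interpEdge e t)}

/-- The trough object of an edge `e`, a subset of `ℝ^d × ℝ`. -/
def trough {d : ℕ} (e : Pt d × Pt d) (δ : ℝ) : Set (Pt d × ℝ) :=
  {p | segDist e p.1 ≤ 4 * p.2 ∧ 4 * p.2 ≤ 8 * δ⁻¹ * dist e.1 e.2}

/-- The axis-parallel hypercube in `ℝ^d × ℝ` with lower corner `(a, b)` and side length `s`. -/
def cube {d : ℕ} (a : Pt d) (b s : ℝ) : Set (Pt d × ℝ) :=
  {p | (∀ i, p.1 i ∈ Set.Icc (a i) (a i + s)) ∧ p.2 ∈ Set.Icc b (b + s)}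

end

/-!
The points of an edge inside the ball `B(q, ρ)` form a segment. Marking it at spacing `s`, both ends
included, uses at most `length / s + 2` points. The rounding term `2` is paid for by enlarging the
ball: an edge of length at least `s` that meets `B(q, ρ)` has length at least `s` inside
`B(q, ρ + s)`. So each edge receives at most `3 / s` times its length inside `B(q, ρ + s)`, and
summing over the edges of a `c`-packed curve gives at most `3 c (ρ + s) / s` points; the theorem is
the case `ρ = 2 r`, `s = δ r`.
-/

section CandidatePoints

open Set Metric MeasureTheory

variable {d : ℕ} {e : Pt d × Pt d} {q : Pt d} {ρ s : ℝ}

theorem exists_finset_bracketing_Icc {a b h : ℝ} (hab : a ≤ b) (hh : 0 < h) :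
    ∃ T : Finset ℝ, (T.card : ℝ) ≤ (b - a) / h + 2 ∧ ↑T ⊆ Icc a b ∧
      ∀ t ∈ Icc a b, ∃ u ∈ T, ∃ v ∈ T, t ∈ Icc u v ∧ v - u ≤ h := by
  classical
  let p : ℕ → ℝ := fun i ↦ min b (a + i * h)
  refine ⟨(Finset.range (⌊(b - a) / h⌋₊ + 2)).image p, ?_, ?_, ?_⟩
  · have hcard : (((Finset.range (⌊(b - a) / h⌋₊ + 2)).image p).card : ℝ) ≤
        ⌊(b - a) / h⌋₊ + 2 := by
      exact_mod_cast Finset.card_image_le.trans (Finset.card_range _).le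
    have hfloor : (⌊(b - a) / h⌋₊ : ℝ) ≤ (b - a) / h :=
      Nat.floor_le (div_nonneg (sub_nonneg.2 hab) hh.le)
    linarith
  · intro x hx
    obtain ⟨i, -, rfl⟩ := Finset.mem_image.1 hx
    exact ⟨le_min hab (le_add_of_nonneg_right (by positivity)), min_le_left _ _⟩
  · rintro t ⟨hat, htb⟩
    set i := ⌊(t - a) / h⌋₊ with hi
    have hi_le : i * h ≤ t - a :=
      (le_div_iff₀ hh).1 (Nat.floor_le (div_nonneg (sub_nonneg.2 hat) hh.le))
    have lt_hi : t - a < (i + 1) * h := (div_lt_iff₀ hh).1 (Nat.lt_floor_add_one _)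
    have hi_floor : i ≤ ⌊(b - a) / h⌋₊ := by rw [hi]; gcongr
    have hpi : p i = a + i * h := min_eq_right (by linarith)
    have hp_succ : p (i + 1) ≤ a + (i + 1) * h := by simp [p]
    refine ⟨p i, Finset.mem_image_of_mem p (Finset.mem_range.2 (by lia)),
      p (i + 1), Finset.mem_image_of_mem p (Finset.mem_range.2 (by lia)),
      ⟨by linarith, le_min htb (by push_cast; linarith)⟩, by linarith⟩

theorem interpEdge_eq_lineMap (e : Pt d × Pt d) :
    interpEdge e = AffineMap.lineMap (k := ℝ) e.1 e.2 :=
  funext fun t ↦ (AffineMap.lineMap_apply_module e.1 e.2 t).symm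

theorem dist_interpEdge_interpEdge (e : Pt d × Pt d) (t u : ℝ) :
    dist (interpEdge e t) (interpEdge e u) = |t - u| * dist e.1 e.2 := by
  rw [interpEdge_eq_lineMap, dist_lineMap_lineMap, Real.dist_eq]

theorem dist_interpEdge_le_of_mem_Icc {t u v x : ℝ} (hx : x ∈ Icc u v) (ht : t ∈ Icc u v)
    (h : (v - u) * dist e.1 e.2 ≤ s) : dist (interpEdge e x) (interpEdge e t) ≤ s := by
  rw [dist_interpEdge_interpEdge]
  exact (mul_le_mul_of_nonneg_right (abs_sub_le_of_le_of_le hx.1 hx.2 ht.1 ht.2)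
    dist_nonneg).trans h

/-- The parameters in `[0,1]` of the points of the edge `e` lying in the closed ball `B(q, ρ)`; it
is the set whose measure enters `segBallLength e q ρ`. -/
def ballParams (e : Pt d × Pt d) (q : Pt d) (ρ : ℝ) : Set ℝ :=
  {t | t ∈ Icc (0 : ℝ) 1 ∧ interpEdge e t ∈ closedBall q ρ}

theorem ballParams_eq_inter_preimage (e : Pt d × Pt d) (q : Pt d) (ρ : ℝ) :
    ballParams e q ρ = Icc 0 1 ∩ AffineMap.lineMap (k := ℝ) e.1 e.2 ⁻¹' closedBall q ρ := by
  rw [← interpEdge_eq_lineMap]; rfl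

theorem convex_ballParams : Convex ℝ (ballParams e q ρ) := by
  rw [ballParams_eq_inter_preimage]
  exact (convex_Icc 0 1).inter ((convex_closedBall q ρ).affine_preimage _)

theorem isCompact_ballParams : IsCompact (ballParams e q ρ) := by
  rw [ballParams_eq_inter_preimage]
  exact isCompact_Icc.inter_right (isClosed_closedBall.preimage AffineMap.lineMap_continuous)

theorem exists_ballParams_eq_Icc (h : (ballParams e q ρ).Nonempty) :
    ∃ a b, a ≤ b ∧ ballParams e q ρ = Icc a b := by
  have hIcc := eq_Icc_of_connected_compact ⟨h, convex_ballParams.isPreconnected⟩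
    isCompact_ballParams
  exact ⟨_, _, nonempty_Icc.1 (hIcc ▸ h), hIcc⟩

theorem ballParams_mono (e : Pt d × Pt d) (q : Pt d) : Monotone (ballParams e q) :=
  fun _ _ h _ ht ↦ ⟨ht.1, closedBall_subset_closedBall h ht.2⟩

theorem segBallLength_nonneg (e : Pt d × Pt d) (q : Pt d) (ρ : ℝ) : 0 ≤ segBallLength e q ρ :=
  mul_nonneg ENNReal.toReal_nonneg dist_nonneg

theorem sub_mul_dist_le_segBallLength {a b : ℝ} (h : Icc a b ⊆ ballParams e q ρ) :
    (b - a) * dist e.1 e.2 ≤ segBallLength e q ρ := by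
  have hvol : volume.real (Icc a b) ≤ volume.real (ballParams e q ρ) :=
    measureReal_mono h isCompact_ballParams.measure_lt_top.ne
  rw [Real.volume_real_Icc] at hvol
  exact mul_le_mul_of_nonneg_right ((le_max_left _ _).trans hvol) dist_nonneg

theorem mul_dist_le_segBallLength_add {h : ℝ} (hne : (ballParams e q ρ).Nonempty)
    (h0 : 0 ≤ h) (h1 : h ≤ 1) :
    h * dist e.1 e.2 ≤ segBallLength e q (ρ + h * dist e.1 e.2) := by
  obtain ⟨t, ⟨ht0, ht1⟩, htq⟩ := hne
  -- `[x, x + h]` is a subinterval of `[0,1]` containing `t`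
  set x := min t (1 - h)
  have hx0 : 0 ≤ x := le_min ht0 (by linarith)
  have hxt : x ≤ t := min_le_left _ _
  have hx1 : x + h ≤ 1 := by linarith [min_le_right t (1 - h)]
  have htx : t ≤ x + h := by grind
  have hsub : Icc x (x + h) ⊆ ballParams e q (ρ + h * dist e.1 e.2) := by
    rintro u ⟨hxu, hux⟩
    have hut : |u - t| ≤ h := abs_le.2 ⟨by linarith, by linarith⟩
    refine ⟨⟨hx0.trans hxu, hux.trans hx1⟩, ?_⟩
    calc dist (interpEdge e u) q
        ≤ dist (interpEdge e u) (interpEdge e t) + dist (interpEdge e t) q := dist_triangle _ _ _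
      _ ≤ h * dist e.1 e.2 + ρ := by
          rw [dist_interpEdge_interpEdge]
          exact add_le_add (mul_le_mul_of_nonneg_right hut dist_nonneg) htq
      _ = ρ + h * dist e.1 e.2 := add_comm _ _
  simpa only [add_sub_cancel_left] using sub_mul_dist_le_segBallLength hsub

theorem exists_finset_bracketing_ballParams (q : Pt d) (ρ : ℝ) (hs : 0 < s)
    (he : s ≤ dist e.1 e.2) :
    ∃ T : Finset ℝ, s * T.card ≤ 3 * segBallLength e q (ρ + s) ∧ ↑T ⊆ ballParams e q ρ ∧
      ∀ t ∈ ballParams e q ρ, ∃ u ∈ T, ∃ v ∈ T, t ∈ Icc u v ∧ (v - u) * dist e.1 e.2 ≤ s := by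
  rcases (ballParams e q ρ).eq_empty_or_nonempty with hempty | hne
  · exact ⟨∅, by simp [segBallLength_nonneg], by simp, by simp [hempty]⟩
  obtain ⟨a, b, hab, hIcc⟩ := exists_ballParams_eq_Icc hne
  have hD : 0 < dist e.1 e.2 := hs.trans_le he
  set h := s / dist e.1 e.2
  have hhD : h * dist e.1 e.2 = s := div_mul_cancel₀ s hD.ne'
  have hh : 0 < h := div_pos hs hD
  obtain ⟨T, hcard, hT, hbracket⟩ := exists_finset_bracketing_Icc hab hh
  have h_inside : (b - a) * dist e.1 e.2 ≤ segBallLength e q (ρ + s) :=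
    sub_mul_dist_le_segBallLength <| hIcc ▸ ballParams_mono e q (by linarith)
  have h_rounding : s ≤ segBallLength e q (ρ + s) := by
    simpa only [hhD] using mul_dist_le_segBallLength_add hne hh.le ((div_le_one hD).2 he)
  refine ⟨T, ?_, hIcc ▸ hT, fun t ht ↦ ?_⟩
  · calc s * T.card
        ≤ s * ((b - a) / h + 2) := mul_le_mul_of_nonneg_left hcard hs.le
      _ = (b - a) * dist e.1 e.2 + 2 * s := by rw [← hhD]; field_simp
      _ ≤ 3 * segBallLength e q (ρ + s) := by linarith
  · obtain ⟨u, hu, v, hv, htuv, hvu⟩ := hbracket t (hIcc ▸ ht)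
    exact ⟨u, hu, v, hv, htuv, hhD ▸ mul_le_mul_of_nonneg_right hvu hD.le⟩

/-- `W` is a set of candidate points at scale `s` for the part of the edges `E` inside `B(q, ρ)`:
its points lie on that part, and every point of it lies between two points of `W` on its own edge,
each within distance `s`. Points on an edge are given by their parameters in `[0,1]`. -/
structure IsCandidateSet (E : List (Pt d × Pt d)) (q : Pt d) (ρ s : ℝ) (W : Finset (Pt d)) :
    Prop where
  mem_edge_and_dist_le : ∀ w ∈ W,
    (∃ e ∈ E, ∃ t ∈ Icc (0 : ℝ) 1, w = interpEdge e t) ∧ dist w q ≤ ρ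
  exists_bracket : ∀ e ∈ E, ∀ t ∈ Icc (0 : ℝ) 1, dist (interpEdge e t) q ≤ ρ →
    ∃ u ∈ Icc (0 : ℝ) 1, ∃ v ∈ Icc (0 : ℝ) 1,
      interpEdge e u ∈ W ∧ interpEdge e v ∈ W ∧ u ≤ t ∧ t ≤ v ∧
      dist (interpEdge e u) (interpEdge e t) ≤ s ∧ dist (interpEdge e v) (interpEdge e t) ≤ s

theorem exists_isCandidateSet {E : List (Pt d × Pt d)} (q : Pt d) (ρ : ℝ) (hs : 0 < s)
    (hE : ∀ e ∈ E, s ≤ dist e.1 e.2) :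
    ∃ W : Finset (Pt d), IsCandidateSet E q ρ s W ∧
      s * W.card ≤ 3 * (E.map fun e ↦ segBallLength e q (ρ + s)).sum := by
  classical
  choose T hcard hT hbracket using fun i : Fin E.length ↦
    exists_finset_bracketing_ballParams q ρ hs (hE E[i] (List.getElem_mem i.2))
  refine ⟨Finset.univ.biUnion fun i ↦ (T i).image (interpEdge E[i]), ⟨?_, ?_⟩, ?_⟩
  · simp only [Finset.mem_biUnion, Finset.mem_image, Finset.mem_univ, true_and]
    rintro _ ⟨i, t, ht, rfl⟩
    obtain ⟨ht01, htq⟩ := hT i ht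
    exact ⟨⟨E[i], List.getElem_mem i.2, t, ht01, rfl⟩, htq⟩
  · intro e he t ht01 htq
    obtain ⟨n, hn, rfl⟩ := List.getElem_of_mem he
    obtain ⟨u, hu, v, hv, htuv, hvu⟩ := hbracket ⟨n, hn⟩ t ⟨ht01, htq⟩
    have huv : u ≤ v := htuv.1.trans htuv.2
    have mem_W {x : ℝ} (hx : x ∈ T ⟨n, hn⟩) :
        interpEdge E[n] x ∈ Finset.univ.biUnion fun i ↦ (T i).image (interpEdge E[i]) :=
      Finset.mem_biUnion.2 ⟨⟨n, hn⟩, Finset.mem_univ _, Finset.mem_image_of_mem _ hx⟩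
    exact ⟨u, (hT _ hu).1, v, (hT _ hv).1, mem_W hu, mem_W hv, htuv.1, htuv.2,
      dist_interpEdge_le_of_mem_Icc (left_mem_Icc.2 huv) htuv hvu,
      dist_interpEdge_le_of_mem_Icc (right_mem_Icc.2 huv) htuv hvu⟩
  · have hW : ((Finset.univ.biUnion fun i ↦ (T i).image (interpEdge E[i])).card : ℝ) ≤
        ∑ i, ((T i).card : ℝ) := by
      exact_mod_cast Finset.card_biUnion_le.trans
        (Finset.sum_le_sum fun i _ ↦ Finset.card_image_le)
    calc s * _ ≤ s * ∑ i, ((T i).card : ℝ) := mul_le_mul_of_nonneg_left hW hs.le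
      _ = ∑ i, s * ((T i).card : ℝ) := Finset.mul_sum ..
      _ ≤ ∑ i : Fin E.length, 3 * segBallLength E[i] q (ρ + s) :=
          Finset.sum_le_sum fun i _ ↦ hcard i
      _ = 3 * ∑ i : Fin E.length, segBallLength E[i] q (ρ + s) := (Finset.mul_sum ..).symm
      _ = 3 * (E.map fun e ↦ segBallLength e q (ρ + s)).sum :=
          congrArg _ (Fin.sum_univ_fun_getElem E fun e ↦ segBallLength e q (ρ + s))

theorem CPacked.nonneg {c : ℝ} {l : List (Pt d)} (hpack : CPacked c l) : 0 ≤ c := by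
  have hsum : 0 ≤ ((edgesOf l).map fun e ↦ segBallLength e 0 1).sum :=
    List.sum_nonneg (List.forall_mem_map.2 fun e _ ↦ segBallLength_nonneg e 0 1)
  simpa only [mul_one] using hsum.trans (hpack 0 1 one_pos)

theorem candidate_points_exist_general {c : ℝ} (hs : 0 < s) (hρ : 0 ≤ ρ) {l : List (Pt d)}
    (hpack : CPacked c l) (hedges : ∀ e ∈ edgesOf l, s ≤ dist e.1 e.2) (q : Pt d) :
    ∃ W : Finset (Pt d), (W.card : ℝ) ≤ 3 * c * (ρ + s) / s ∧
      IsCandidateSet (edgesOf l) q ρ s W := by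
  obtain ⟨W, hW, hcard⟩ := exists_isCandidateSet q ρ hs hedges
  refine ⟨W, (le_div_iff₀' hs).2 ?_, hW⟩
  linarith [hpack q (ρ + s) (by positivity)]

theorem three_mul_mul_add_div_le_eighteen_mul_div_sq {δ r c : ℝ} (hδ0 : 0 < δ) (hδ1 : δ ≤ 1)
    (hr : 0 < r) (hc : 0 ≤ c) :
    3 * c * (2 * r + δ * r) / (δ * r) ≤ 18 * c / δ ^ 2 :=
  calc 3 * c * (2 * r + δ * r) / (δ * r) = 3 * c * ((2 + δ) * δ) / δ ^ 2 := by field_simp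
    _ ≤ 3 * c * 6 / δ ^ 2 := by gcongr; nlinarith
    _ = 18 * c / δ ^ 2 := by ring

end CandidatePoints

/-- Let `0 < δ ≤ 1`, `r > 0`, and let `K` be a `c`-packed polygonal curve in
`ℝ^d` (vertex list `l`) all of whose edges have length at least `δ r`. Then for every point
`q` there is a finite set `W` of at most `18 c / δ²` points, each on `K` and within distance
`2r` of `q`, such that every point `k` on `K` with `‖k − q‖ ≤ 2r` admits `u, v ∈ W` on the
same edge of `K` as `k`, with `k` on the subsegment from `u` to `v`, `‖u − k‖ ≤ δr` and
`‖v − k‖ ≤ δr`. -/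
theorem candidate_points_exist {d : ℕ} (δ r c : ℝ) (hδ0 : 0 < δ) (hδ1 : δ ≤ 1) (hr : 0 < r)
    (l : List (Pt d)) (hpack : CPacked c l)
    (hedges : ∀ e ∈ edgesOf l, δ * r ≤ dist e.1 e.2)
    (q : Pt d) :
    ∃ W : Finset (Pt d),
      (W.card : ℝ) ≤ 18 * c / δ ^ 2 ∧
      (∀ w ∈ W,
        (∃ e ∈ edgesOf l, ∃ t ∈ Set.Icc (0:ℝ) 1, w = interpEdge e t) ∧ dist w q ≤ 2 * r) ∧
      (∀ e ∈ edgesOf l, ∀ tk ∈ Set.Icc (0:ℝ) 1,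
        dist (interpEdge e tk) q ≤ 2 * r →
          ∃ tu ∈ Set.Icc (0:ℝ) 1, ∃ tv ∈ Set.Icc (0:ℝ) 1,
            interpEdge e tu ∈ W ∧ interpEdge e tv ∈ W ∧
            tu ≤ tk ∧ tk ≤ tv ∧
            dist (interpEdge e tu) (interpEdge e tk) ≤ δ * r ∧
            dist (interpEdge e tv) (interpEdge e tk) ≤ δ * r) := by
  obtain ⟨W, hcard, hW⟩ :=
    candidate_points_exist_general (ρ := 2 * r) (by positivity) (by positivity) hpack hedges q
  exact ⟨W, hcard.trans (three_mul_mul_add_div_le_eighteen_mul_div_sq hδ0 hδ1 hr hpack.nonneg),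
    hW.mem_edge_and_dist_le, hW.exists_bracket⟩
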